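/- Let S be an abelian subgroup of the Pauli group G_d^n with no nontrivial scalars and with Nat.card S = d^n, and let w_1, …, w_K ∈ G_d^n. Then the centralizer C_S(W) = {g ∈ S | g * w_i = w_i * g for all i = 1,…,K} has the same cardinality as the set R(S) ∩ {x | ω(R(w_i), x) = 0 for all i}, i.e. Nat.card C_S(W) = Nat.card {x ∈ R(S) | ω(R(w_i), x) = 0 for all i = 1,…,K}. -/

import Mathlib

open Matrix

noncomputable def q (d : ℕ) : ℂ := Complex.exp (2 * Real.pi * Complex.I / d)

/-- Dot product of two vectors over `ZMod d`. -/
def dotp {n d : ℕ} (A B : Fin n → ZMod d) : ZMod d := ∑ i, A i * B i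

/-- The Pauli word `W(U,V)` with entries `q^{⟨U,J⟩}` at `(J, K)` when `J = K + V`. -/
noncomputable def PauliWord (d n : ℕ) (U V : Fin n → ZMod d) :
    Matrix (Fin n → ZMod d) (Fin n → ZMod d) ℂ :=
  Matrix.of fun J K => if J = K + V then q d ^ (dotp U J).val else 0

/-- The n-qudit Pauli group, as a set of matrices. -/
noncomputable def PauliSet (d n : ℕ) : Set (Matrix (Fin n → ZMod d) (Fin n → ZMod d) ℂ) :=
  {g | ∃ (k : ZMod d) (U V : Fin n → ZMod d), g = q d ^ k.val • PauliWord d n U V}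

/-- The symplectic product `ω((U1,U2),(V1,V2)) = ⟨U1,V2⟩ - ⟨U2,V1⟩`. -/
def symp {n d : ℕ} (x y : (Fin n → ZMod d) × (Fin n → ZMod d)) : ZMod d :=
  dotp x.1 y.2 - dotp x.2 y.1

/-!
Pauli words multiply by `W(U,V) W(U',V') = q^{-⟨U',V⟩} W(U+U',V+V')`, so two Pauli matrices commute
exactly when the symplectic product of their labels vanishes; hence `R` maps the centralizer onto
the kernel. Pauli matrices with the same label are proportional, and a group with no nontrivial
scalars contains no two distinct proportional elements, so `R` is injective on `S`.
-/

lemma smul_eq_self_of_mem {R A : Type*} [Monoid A] [SMul R A] [IsScalarTower R A A] {S : Set A}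
    (hmul : ∀ a ∈ S, ∀ b ∈ S, a * b ∈ S) (hinv : ∀ a ∈ S, ∃ b ∈ S, a * b = 1)
    (hscal : ∀ c : R, c • (1 : A) ∈ S → c • (1 : A) = 1)
    {c : R} {a : A} (ha : a ∈ S) (hca : c • a ∈ S) : c • a = a := by
  obtain ⟨b, hb, hab⟩ := hinv a ha
  have hc : c • (1 : A) ∈ S := by simpa only [smul_mul_assoc, hab] using hmul _ hca b hb
  rw [← smul_one_mul c a, hscal c hc, one_mul]

lemma q_ne_zero (d : ℕ) : q d ≠ 0 :=
  Complex.exp_ne_zero _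

lemma dotp_eq_dotProduct {d n : ℕ} (A B : Fin n → ZMod d) : dotp A B = A ⬝ᵥ B :=
  rfl

lemma pauliWord_ne_zero {d n : ℕ} (U V : Fin n → ZMod d) : PauliWord d n U V ≠ 0 := by
  intro h
  have hentry : PauliWord d n U V V 0 = 0 := by rw [h, Matrix.zero_apply]
  simp [PauliWord, q_ne_zero] at hentry

section PauliWord

variable {d n : ℕ} [NeZero d]

lemma q_pow_val (x : ZMod d) : q d ^ x.val = ZMod.stdAddChar x := by
  rw [ZMod.stdAddChar_apply, ZMod.toCircle_apply, q, ← Complex.exp_nat_mul]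
  ring_nf

lemma pauliWord_apply (U V J K : Fin n → ZMod d) :
    PauliWord d n U V J K = if J = K + V then ZMod.stdAddChar (U ⬝ᵥ J) else 0 := by
  simp only [PauliWord, of_apply, q_pow_val, dotp_eq_dotProduct]

lemma pauliWord_mul_pauliWord (U V U' V' : Fin n → ZMod d) :
    PauliWord d n U V * PauliWord d n U' V' =
      (ZMod.stdAddChar (-(U' ⬝ᵥ V)) : ℂ) • PauliWord d n (U + U') (V + V') := by
  ext J L
  have hshift : L + V' + V = L + (V + V') := by abel
  simp only [mul_apply, Matrix.smul_apply, pauliWord_apply, mul_ite, mul_zero, Finset.sum_ite_eq',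
    Finset.mem_univ, if_true, hshift, smul_eq_mul]
  split_ifs with hJ
  · rw [← AddChar.map_add_eq_mul, ← AddChar.map_add_eq_mul, hJ]
    simp only [dotProduct_add, add_dotProduct]
    ring_nf
  · rw [zero_mul]

lemma commute_pauliWord_iff (U V U' V' : Fin n → ZMod d) :
    Commute (PauliWord d n U V) (PauliWord d n U' V') ↔ symp (U, V) (U', V') = 0 := by
  calc Commute (PauliWord d n U V) (PauliWord d n U' V')
    _ ↔ (ZMod.stdAddChar (-(U' ⬝ᵥ V)) : ℂ) = ZMod.stdAddChar (-(U ⬝ᵥ V')) := by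
      rw [commute_iff_eq, pauliWord_mul_pauliWord, pauliWord_mul_pauliWord, add_comm U',
        add_comm V', (smul_left_injective ℂ (pauliWord_ne_zero _ _)).eq_iff]
    _ ↔ U ⬝ᵥ V' = V ⬝ᵥ U' := by
      rw [ZMod.injective_stdAddChar.eq_iff, neg_inj, dotProduct_comm U' V, eq_comm]
    _ ↔ symp (U, V) (U', V') = 0 := sub_eq_zero.symm

end PauliWord

section Label

variable {d n : ℕ}
  {Rmap : Matrix (Fin n → ZMod d) (Fin n → ZMod d) ℂ → (Fin n → ZMod d) × (Fin n → ZMod d)}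
  (hR : ∀ (k : ZMod d) (U V : Fin n → ZMod d),
    Rmap (q d ^ k.val • PauliWord d n U V) = (U, V))
include hR

lemma exists_eq_smul_of_label_eq {g h : Matrix (Fin n → ZMod d) (Fin n → ZMod d) ℂ}
    (hg : g ∈ PauliSet d n) (hh : h ∈ PauliSet d n) (hgh : Rmap g = Rmap h) :
    ∃ c : ℂ, g = c • h := by
  obtain ⟨k, U, V, rfl⟩ := hg
  obtain ⟨l, U', V', rfl⟩ := hh
  obtain ⟨rfl, rfl⟩ : U = U' ∧ V = V' := by simpa only [hR, Prod.mk.injEq] using hgh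
  refine ⟨q d ^ k.val / q d ^ l.val, ?_⟩
  rw [smul_smul, div_mul_cancel₀ _ (pow_ne_zero _ (q_ne_zero d))]

lemma injOn_label [NeZero d] {S : Set (Matrix (Fin n → ZMod d) (Fin n → ZMod d) ℂ)}
    (hSsub : S ⊆ PauliSet d n) (hSmul : ∀ a ∈ S, ∀ b ∈ S, a * b ∈ S)
    (hSinv : ∀ a ∈ S, ∃ b ∈ S, a * b = 1)
    (hSscal : ∀ c : ℂ, c • (1 : Matrix (Fin n → ZMod d) (Fin n → ZMod d) ℂ) ∈ S →
      c • (1 : Matrix (Fin n → ZMod d) (Fin n → ZMod d) ℂ) = 1) :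
    Set.InjOn Rmap S := by
  intro g hg h hh hgh
  obtain ⟨c, rfl⟩ := exists_eq_smul_of_label_eq hR (hSsub hg) (hSsub hh) hgh
  exact smul_eq_self_of_mem hSmul hSinv hSscal hh hg

lemma commute_iff_symp_label_eq_zero [NeZero d]
    {g h : Matrix (Fin n → ZMod d) (Fin n → ZMod d) ℂ}
    (hg : g ∈ PauliSet d n) (hh : h ∈ PauliSet d n) :
    Commute g h ↔ symp (Rmap g) (Rmap h) = 0 := by
  obtain ⟨k, U, V, rfl⟩ := hg
  obtain ⟨l, U', V', rfl⟩ := hh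
  have hq (m : ℕ) : q d ^ m ≠ 0 := pow_ne_zero m (q_ne_zero d)
  rw [Commute.smul_left_iff₀ (hq _), Commute.smul_right_iff₀ (hq _), commute_pauliWord_iff,
    hR, hR]

lemma image_label_centralizer [NeZero d] {ι : Sort*}
    {S : Set (Matrix (Fin n → ZMod d) (Fin n → ZMod d) ℂ)} (hSsub : S ⊆ PauliSet d n)
    {w : ι → Matrix (Fin n → ZMod d) (Fin n → ZMod d) ℂ} (hw : ∀ i, w i ∈ PauliSet d n) :
    Rmap '' {g | g ∈ S ∧ ∀ i, g * w i = w i * g} =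
      {x | x ∈ Rmap '' S ∧ ∀ i, symp (Rmap (w i)) x = 0} := by
  have hcentralizer : {g | g ∈ S ∧ ∀ i, g * w i = w i * g} =
      S ∩ Rmap ⁻¹' {x | ∀ i, symp (Rmap (w i)) x = 0} := by
    ext g
    refine and_congr_right fun hg => forall_congr' fun i => ?_
    rw [eq_comm, ← commute_iff_eq, commute_iff_symp_label_eq_zero hR (hw i) (hSsub hg)]
  rw [hcentralizer, Set.image_inter_preimage]
  rfl

theorem card_centralizer_eq_card_kernel_general [NeZero d] {ι : Sort*}
    {S : Set (Matrix (Fin n → ZMod d) (Fin n → ZMod d) ℂ)}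
    (hSsub : S ⊆ PauliSet d n) (hSmul : ∀ a ∈ S, ∀ b ∈ S, a * b ∈ S)
    (hSinv : ∀ a ∈ S, ∃ b ∈ S, a * b = 1)
    (hSscal : ∀ c : ℂ, c • (1 : Matrix (Fin n → ZMod d) (Fin n → ZMod d) ℂ) ∈ S →
      c • (1 : Matrix (Fin n → ZMod d) (Fin n → ZMod d) ℂ) = 1)
    {w : ι → Matrix (Fin n → ZMod d) (Fin n → ZMod d) ℂ} (hw : ∀ i, w i ∈ PauliSet d n) :
    Nat.card {g | g ∈ S ∧ ∀ i, g * w i = w i * g} =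
      Nat.card {x | x ∈ Rmap '' S ∧ ∀ i, symp (Rmap (w i)) x = 0} := by
  rw [← image_label_centralizer hR hSsub hw]
  have hinj := injOn_label hR hSsub hSmul hSinv hSscal
  exact (Nat.card_image_of_injOn (hinj.mono fun _ hg => hg.1)).symm

end Label

theorem card_centralizer_eq_card_kernel (d n K : ℕ) [NeZero d] (hd : 2 ≤ d) (hn : 1 ≤ n)
    (Rmap : Matrix (Fin n → ZMod d) (Fin n → ZMod d) ℂ →
      (Fin n → ZMod d) × (Fin n → ZMod d))
    (hR : ∀ (k : ZMod d) (U V : Fin n → ZMod d),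
      Rmap (q d ^ k.val • PauliWord d n U V) = (U, V))
    (S : Set (Matrix (Fin n → ZMod d) (Fin n → ZMod d) ℂ))
    (hSsub : S ⊆ PauliSet d n)
    (hS1 : (1 : Matrix (Fin n → ZMod d) (Fin n → ZMod d) ℂ) ∈ S)
    (hSmul : ∀ a ∈ S, ∀ b ∈ S, a * b ∈ S)
    (hSinv : ∀ a ∈ S, ∃ b ∈ S, a * b = 1)
    (hScomm : ∀ a ∈ S, ∀ b ∈ S, a * b = b * a)
    (hSscal : ∀ c : ℂ, c • (1 : Matrix (Fin n → ZMod d) (Fin n → ZMod d) ℂ) ∈ S →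
      c • (1 : Matrix (Fin n → ZMod d) (Fin n → ZMod d) ℂ) = 1)
    (hcard : Nat.card S = d ^ n)
    (w : Fin K → Matrix (Fin n → ZMod d) (Fin n → ZMod d) ℂ)
    (hw : ∀ i, w i ∈ PauliSet d n) :
    Nat.card {g : Matrix (Fin n → ZMod d) (Fin n → ZMod d) ℂ |
        g ∈ S ∧ ∀ i, g * w i = w i * g} =
      Nat.card {x : (Fin n → ZMod d) × (Fin n → ZMod d) |
        x ∈ Rmap '' S ∧ ∀ i, symp (Rmap (w i)) x = 0} :=
  card_centralizer_eq_card_kernel_general hR hSsub hSmul hSinv hSscal hw
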